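/- Let m ≥ 2, let U ⊆ ℝ^m be open, let (f, ν) be a front on U with values in ℝ^{m+1}, let p ∈ U be an A₂-point, and let Φ : V → U be a coordinate system as in the coordinate lemma, i.e. a diffeomorphism onto a neighborhood of p with Φ(o) = p such that f̃ := f∘Φ, ν̃ := ν∘Φ satisfy: Φ^{−1}(Σ) = {u_m = 0}; ∂_m f̃ = 0 on {u_m = 0}; and ⟨∂_j f̃, ∂_m∂_m f̃⟩ = 0 at o for j = 1,…,m−1. Then at the point o, both the tangential part D_m φ_m := ∂_m∂_m f̃ − ⟨∂_m∂_m f̃, ν̃⟩ν̃ and the vector ψ_m := ∂_m ν̃ are nonzero and orthogonal to each of ∂_1 f̃,…,∂_{m−1} f̃; in particular, D_m φ_m and ψ_m are proportional (each is a nonzero scalar multiple of the other) at o. -/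

import Mathlib

open scoped Matrix

noncomputable section

/-- Partial derivative of a vector-valued map in the `k`-th coordinate direction. -/
def pd {m N : ℕ} (k : Fin m) (f : (Fin m → ℝ) → (Fin N → ℝ)) :
    (Fin m → ℝ) → (Fin N → ℝ) :=
  fun q => fderiv ℝ f q (Pi.single k 1)

/-- The Jacobian function `λ(q) = det(∂_1 f, …, ∂_m f, ν)` of a frontal `(f, ν)`. -/
def lamb {m : ℕ} (f ν : (Fin m → ℝ) → (Fin (m + 1) → ℝ)) (q : Fin m → ℝ) : ℝ :=
  Matrix.det (Matrix.of (Fin.snoc (fun k : Fin m => pd k f q) (ν q)))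

/-- `p` is an `A₂`-point of the frontal `(f, ν)`: a nondegenerate singular point at which
the null direction is transversal to the singular hypersurface, i.e. `dλ_p(η) ≠ 0` for
(any) nonzero null vector `η`. -/
def IsA2 {m : ℕ} (f ν : (Fin m → ℝ) → (Fin (m + 1) → ℝ)) (p : Fin m → ℝ) : Prop :=
  lamb f ν p = 0 ∧ fderiv ℝ (lamb f ν) p ≠ 0 ∧
  ∀ X : Fin m → ℝ, X ≠ 0 → fderiv ℝ f p X = 0 → fderiv ℝ (lamb f ν) p X ≠ 0

/-!
A change of coordinates `Φ` multiplies the Jacobian `λ` by `det dΦ`, so being an `A₂`-point and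
being a front pass to `(f ∘ Φ, ν ∘ Φ)`; write `(f, ν)` for the latter and `∂` for the null
coordinate direction. At `o` the row `∂f` of `λ = det (∂₁f, …, ∂f, ν)` vanishes, hence `∂λ` is the
determinant with that row replaced by `∂∂f`, or equally by its tangential part `Dφ`. The `A₂`
condition makes it nonzero, so `ν`, `Dφ` and the remaining `∂ⱼf` form a basis, and the common
orthogonal complement of `ν` and the remaining `∂ⱼf` is the line spanned by `Dφ`. Finally `ψ = ∂ν`
lies on this line because `⟨∂ν, ν⟩ = 0` and `⟨∂ν, ∂ⱼf⟩ = ⟨∂ⱼν, ∂f⟩ = 0`, and `ψ ≠ 0` because a front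
has no direction annihilated by both differentials and `∂f = 0`.
-/

open Filter Function Matrix
open scoped Topology

section AreaForm

variable {m : ℕ} {R : Type*} [CommRing R]

/-- The contraction `v ↦ det (v₁, …, v_m, n)` of the standard volume form with `n`. For a unit
vector `n` it is the oriented area form of the hyperplane `n^⊥`; the slot of `n` is the last one,
as in `lamb`, so that `lamb f ν` is the coefficient of the pullback of `areaForm ν` under `f`. -/
def areaForm (n : Fin (m + 1) → R) : (Fin (m + 1) → R) [⋀^Fin m]→ₗ[R] R where
  toMultilinearMap :=
    (LinearMap.applyₗ n).compMultilinearMap detRowAlternating.toMultilinearMap.curryRight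
  map_eq_zero_of_eq' v i j hv hij :=
    detRowAlternating.map_eq_zero_of_eq (Fin.snoc v n) (by simpa using hv)
      ((Fin.castSucc_injective m).ne hij)

theorem areaForm_apply (n : Fin (m + 1) → R) (v : Fin m → Fin (m + 1) → R) :
    areaForm n v = det (of (Fin.snoc v n)) :=
  rfl

theorem areaForm_update (n : Fin (m + 1) → R) (v : Fin m → Fin (m + 1) → R) (k : Fin m)
    (w : Fin (m + 1) → R) :
    areaForm n (update v k w) = det (of (update (Fin.snoc v n) k.castSucc w)) := by
  rw [areaForm_apply, Fin.snoc_update]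

theorem areaForm_update_self (n : Fin (m + 1) → R) (v : Fin m → Fin (m + 1) → R) (k : Fin m) :
    areaForm n (update v k n) = 0 :=
  det_zero_of_row_eq (Fin.castSucc_ne_last k) (by ext; simp [-Fin.snoc_update])

theorem areaForm_update_sub_smul_self (n : Fin (m + 1) → R) (v : Fin m → Fin (m + 1) → R)
    (k : Fin m) (w : Fin (m + 1) → R) (c : R) :
    areaForm n (update v k (w - c • n)) = areaForm n (update v k w) := by
  rw [AlternatingMap.map_update_sub, AlternatingMap.map_update_smul, areaForm_update_self,
    smul_zero, sub_zero]

theorem eq_zero_of_orthogonal_of_areaForm_ne_zero [IsDomain R] {n z : Fin (m + 1) → R}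
    {v : Fin m → Fin (m + 1) → R} (hv : areaForm n v ≠ 0) (hzv : ∀ k, z ⬝ᵥ v k = 0)
    (hzn : z ⬝ᵥ n = 0) : z = 0 := by
  by_contra hz
  refine hv (exists_mulVec_eq_zero_iff.1 ⟨z, hz, ?_⟩)
  funext i
  change _ ⬝ᵥ z = 0
  rw [dotProduct_comm]
  cases i using Fin.lastCases with
  | last => simpa using hzn
  | cast k => simpa using hzv k

theorem alternatingMap_comp_linearMap_eq_det_mul {ι M : Type*} [Fintype ι] [DecidableEq ι]
    [AddCommGroup M] [Module R M] (ω : M [⋀^ι]→ₗ[R] R) (D : (ι → R) →ₗ[R] M) (v : ι → ι → R) :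
    ω (fun k => D (v k)) = det (of v) * ω (fun k => D (Pi.single k 1)) := by
  have h := DFunLike.congr_fun ((ω.compLinearMap D).eq_smul_basis_det (Pi.basisFun R ι)) v
  rw [AlternatingMap.smul_apply, Pi.basisFun_det_apply, smul_eq_mul, mul_comm] at h
  simpa [comp_def] using h

end AreaForm

theorem exists_eq_smul_of_areaForm_ne_zero {m : ℕ} {K : Type*} [Field K] [LinearOrder K]
    [IsStrictOrderedRing K] {n w z : Fin (m + 1) → K} {v : Fin m → Fin (m + 1) → K} {k : Fin m}
    (hdet : areaForm n (update v k w) ≠ 0) (hwn : w ⬝ᵥ n = 0) (hwv : ∀ j ≠ k, w ⬝ᵥ v j = 0)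
    (hz : z ≠ 0) (hzn : z ⬝ᵥ n = 0) (hzv : ∀ j ≠ k, z ⬝ᵥ v j = 0) :
    ∃ t : K, t ≠ 0 ∧ w = t • z := by
  have hw : w ≠ 0 := fun h => hdet ((areaForm n).map_coord_zero k (by simp [h]))
  have hww : w ⬝ᵥ w ≠ 0 := dotProduct_self_eq_zero.not.2 hw
  set s := (z ⬝ᵥ w) / (w ⬝ᵥ w) with hs
  have hzw : z - s • w = 0 := by
    refine eq_zero_of_orthogonal_of_areaForm_ne_zero hdet (fun j => ?_)
      (by simp [sub_dotProduct, hzn, hwn])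
    rcases eq_or_ne j k with rfl | hj
    · simp [sub_dotProduct, hs, hww]
    · simp [sub_dotProduct, hj, hzv j hj, hwv j hj]
  rw [sub_eq_zero] at hzw
  have hs0 : s ≠ 0 := by
    rintro hs0
    exact hz (by rw [hzw, hs0, zero_smul])
  exact ⟨s⁻¹, inv_ne_zero hs0, by rw [hzw, inv_smul_smul₀ hs0]⟩

section Calculus

variable {𝕜 E F : Type*} [NontriviallyNormedField 𝕜] [NormedAddCommGroup E] [NormedSpace 𝕜 E]
  [NormedAddCommGroup F] [NormedSpace 𝕜 F]

theorem fderiv_multilinear_comp_apply_of_eq_zero {ι G : Type*} {H : ι → Type*} [Finite ι]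
    [DecidableEq ι] [NormedAddCommGroup G] [NormedSpace 𝕜 G] [∀ i, NormedAddCommGroup (H i)]
    [∀ i, NormedSpace 𝕜 (H i)] (A : ContinuousMultilinearMap 𝕜 H G) {g : ∀ i, E → H i} {x : E}
    (hg : ∀ i, DifferentiableAt 𝕜 (g i) x) {k : ι} (hk : g k x = 0) (X : E) :
    fderiv 𝕜 (fun y => A fun i => g i y) x X =
      A (update (fun i => g i x) k (fderiv 𝕜 (g k) x X)) := by
  have := Fintype.ofFinite ι
  rw [(HasFDerivAt.multilinear_comp (f := A) fun i => (hg i).hasFDerivAt).fderiv, _root_.sum_apply]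
  refine Finset.sum_eq_single_of_mem k (Finset.mem_univ k) fun i _ hik => ?_
  exact A.map_coord_zero k (by simpa [hik.symm] using hk)

theorem fderiv_mul_apply_of_eq_zero {a b : E → 𝕜} {x : E} (ha : DifferentiableAt 𝕜 a x)
    (hb : DifferentiableAt 𝕜 b x) (hbx : b x = 0) (X : E) :
    fderiv 𝕜 (fun y => a y * b y) x X = a x * fderiv 𝕜 b x X := by
  simp [fderiv_fun_mul ha hb, hbx]

theorem injective_fderiv_of_eventually_leftInverse {g : E → F} {h : F → E} {x : E}
    (hg : DifferentiableAt 𝕜 g x) (hh : DifferentiableAt 𝕜 h (g x))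
    (hhg : ∀ᶠ y in 𝓝 x, h (g y) = y) : Injective (fderiv 𝕜 g x) := by
  have hcomp : (fderiv 𝕜 h (g x)).comp (fderiv 𝕜 g x) = ContinuousLinearMap.id 𝕜 E :=
    (hh.hasFDerivAt.comp x hg.hasFDerivAt).unique ((hasFDerivAt_id x).congr_of_eventuallyEq hhg)
  exact LeftInverse.injective (DFunLike.congr_fun hcomp)

end Calculus

/-- The determinant as a continuous multilinear function of the rows, the form in which the
differentiation rules for multilinear maps apply to it. -/
def continuousMultilinearDet (ι : Type*) [Fintype ι] [DecidableEq ι] :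
    ContinuousMultilinearMap ℝ (fun _ : ι => ι → ℝ) ℝ where
  toMultilinearMap := detRowAlternating.toMultilinearMap
  cont := Continuous.matrix_det continuous_id

theorem fderiv_dotProduct_add_eq_zero {E ι : Type*} [NormedAddCommGroup E] [NormedSpace ℝ E]
    [Fintype ι] {a b : E → ι → ℝ} {x : E} {c : ℝ} (ha : DifferentiableAt ℝ a x)
    (hb : DifferentiableAt ℝ b x) (h : ∀ᶠ y in 𝓝 x, a y ⬝ᵥ b y = c) (X : E) :
    fderiv ℝ a x X ⬝ᵥ b x + a x ⬝ᵥ fderiv ℝ b x X = 0 := by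
  have hprod := (dotProductBilin (m := ι) (A := ℝ) ℝ ℝ).toContinuousBilinearMap.fderiv_of_bilinear
    ha hb
  have hconst : fderiv ℝ (fun y => a y ⬝ᵥ b y) x = 0 :=
    (EventuallyEq.fderiv_eq h).trans (fderiv_const_apply c)
  have := DFunLike.congr_fun (hprod.symm.trans hconst) X
  simpa [add_comm] using this

section PartialDerivatives

variable {l m N : ℕ} {f : (Fin m → ℝ) → Fin N → ℝ} {Φ : (Fin l → ℝ) → Fin m → ℝ}

theorem pd_comp {x : Fin l → ℝ} (hf : DifferentiableAt ℝ f (Φ x)) (hΦ : DifferentiableAt ℝ Φ x)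
    (k : Fin l) : pd k (f ∘ Φ) x = fderiv ℝ f (Φ x) (pd k Φ x) := by
  rw [pd, fderiv_comp x hf hΦ, ContinuousLinearMap.comp_apply, pd]

theorem differentiableAt_pd {q : Fin m → ℝ} (hf : ContDiffAt ℝ 2 f q) (k : Fin m) :
    DifferentiableAt ℝ (pd k f) q :=
  ((hf.fderiv_right (m := 1) le_rfl).differentiableAt one_ne_zero).clm_apply
    (differentiableAt_const _)

theorem pd_comm {q : Fin m → ℝ} (hf : ContDiffAt ℝ 2 f q) (j k : Fin m) :
    pd j (pd k f) q = pd k (pd j f) q := by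
  have hdf : DifferentiableAt ℝ (fderiv ℝ f) q :=
    (hf.fderiv_right (m := 1) le_rfl).differentiableAt one_ne_zero
  have hpd (i k : Fin m) :
      pd i (pd k f) q = fderiv ℝ (fderiv ℝ f) q (Pi.single i 1) (Pi.single k 1) := by
    unfold pd
    simp [fderiv_clm_apply hdf (differentiableAt_const (Pi.single k (1 : ℝ)))]
  rw [hpd, hpd]
  exact hf.isSymmSndFDerivAt (by simp) _ _

theorem fderiv_dotProduct_eq_zero {q : Fin m → ℝ} {n : Fin N → ℝ} (h : ∀ k, pd k f q ⬝ᵥ n = 0)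
    (X : Fin m → ℝ) : fderiv ℝ f q X ⬝ᵥ n = 0 := by
  rw [pi_eq_sum_univ' X, map_sum, sum_dotProduct]
  refine Finset.sum_eq_zero fun k _ => ?_
  rw [map_smul, smul_dotProduct, ← pd, h, smul_zero]

theorem det_pd_ne_zero {Φ : (Fin m → ℝ) → Fin m → ℝ} {x : Fin m → ℝ}
    (hΦ : Injective (fderiv ℝ Φ x)) : det (of fun k => pd k Φ x) ≠ 0 := by
  have hrows : LinearIndependent ℝ (fun k => pd k Φ x) := by
    simpa [comp_def, pd] using (Pi.basisFun ℝ (Fin m)).linearIndependent.map_injOn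
      (fderiv ℝ Φ x : (Fin m → ℝ) →ₗ[ℝ] Fin m → ℝ) hΦ.injOn
  exact ((isUnit_iff_isUnit_det _).1 (linearIndependent_rows_iff_isUnit.1 hrows)).ne_zero

end PartialDerivatives

section Jacobian

variable {m : ℕ} {f ν : (Fin m → ℝ) → Fin (m + 1) → ℝ}

theorem differentiableAt_snoc_pd {q : Fin m → ℝ} (hf : ContDiffAt ℝ 2 f q)
    (hν : DifferentiableAt ℝ ν q) (i : Fin (m + 1)) :
    DifferentiableAt ℝ (fun x => (Fin.snoc (fun k => pd k f x) (ν x) : Fin (m + 1) → _) i) q := by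
  cases i using Fin.lastCases with
  | last => simpa using hν
  | cast k => simpa using differentiableAt_pd hf k

theorem differentiableAt_lamb {q : Fin m → ℝ} (hf : ContDiffAt ℝ 2 f q)
    (hν : DifferentiableAt ℝ ν q) : DifferentiableAt ℝ (lamb f ν) q :=
  (HasFDerivAt.multilinear_comp (f := continuousMultilinearDet (Fin (m + 1))) fun i =>
    (differentiableAt_snoc_pd hf hν i).hasFDerivAt).differentiableAt

theorem fderiv_lamb_of_pd_eq_zero {q : Fin m → ℝ} (hf : ContDiffAt ℝ 2 f q)
    (hν : DifferentiableAt ℝ ν q) {k : Fin m} (hk : pd k f q = 0) (X : Fin m → ℝ) :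
    fderiv ℝ (lamb f ν) q X =
      areaForm (ν q) (update (fun j => pd j f q) k (fderiv ℝ (pd k f) q X)) := by
  have h := fderiv_multilinear_comp_apply_of_eq_zero (continuousMultilinearDet (Fin (m + 1)))
    (differentiableAt_snoc_pd hf hν) (k := k.castSucc) (by simpa using hk) X
  simp only [Fin.snoc_castSucc] at h
  rw [areaForm_update]
  exact h

theorem lamb_comp {Φ : (Fin m → ℝ) → Fin m → ℝ} {x : Fin m → ℝ} (hf : DifferentiableAt ℝ f (Φ x))
    (hΦ : DifferentiableAt ℝ Φ x) :
    lamb (f ∘ Φ) (ν ∘ Φ) x = det (of fun k => pd k Φ x) * lamb f ν (Φ x) := by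
  unfold lamb
  simp only [pd_comp hf hΦ]
  exact alternatingMap_comp_linearMap_eq_det_mul (areaForm (ν (Φ x))) (fderiv ℝ f (Φ x)).toLinearMap
    fun k => pd k Φ x

theorem fderiv_lamb_comp {Φ : (Fin m → ℝ) → Fin m → ℝ} {x : Fin m → ℝ}
    (hf : ContDiffAt ℝ 2 f (Φ x)) (hν : DifferentiableAt ℝ ν (Φ x)) (hΦ : ContDiffAt ℝ 2 Φ x)
    (hsing : lamb f ν (Φ x) = 0) (X : Fin m → ℝ) :
    fderiv ℝ (lamb (f ∘ Φ) (ν ∘ Φ)) x X =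
      det (of fun k => pd k Φ x) * fderiv ℝ (lamb f ν) (Φ x) (fderiv ℝ Φ x X) := by
  have hΦx : DifferentiableAt ℝ Φ x := hΦ.differentiableAt two_ne_zero
  have hlamb : DifferentiableAt ℝ (lamb f ν) (Φ x) := differentiableAt_lamb hf hν
  have hdet : DifferentiableAt ℝ (fun y => det (of fun k => pd k Φ y)) x :=
    (HasFDerivAt.multilinear_comp (f := continuousMultilinearDet (Fin m)) fun k =>
      (differentiableAt_pd hΦ k).hasFDerivAt).differentiableAt
  have heq : lamb (f ∘ Φ) (ν ∘ Φ) =ᶠ[𝓝 x]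
      fun y => det (of fun k => pd k Φ y) * (lamb f ν ∘ Φ) y := by
    filter_upwards [hΦ.continuousAt.eventually (hf.eventually (by simp)),
      hΦ.eventually (by simp)] with y hfy hΦy
    exact lamb_comp (hfy.differentiableAt two_ne_zero) (hΦy.differentiableAt two_ne_zero)
  rw [heq.fderiv_eq, fderiv_mul_apply_of_eq_zero hdet (hlamb.comp x hΦx) hsing,
    fderiv_comp x hlamb hΦx, ContinuousLinearMap.comp_apply]

end Jacobian

/-- The germ of a front at `q`: `ν` is a unit normal field of `f` near `q`, and no direction at
`q` is annihilated by both differentials. Only the regularity at `q` that second derivatives of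
`f` and first derivatives of `ν` call for is included. -/
structure IsFrontAt {m : ℕ} (f ν : (Fin m → ℝ) → Fin (m + 1) → ℝ) (q : Fin m → ℝ) : Prop where
  contDiffAt : ContDiffAt ℝ 2 f q
  differentiableAt_normal : DifferentiableAt ℝ ν q
  normal_unit : ∀ᶠ x in 𝓝 q, ν x ⬝ᵥ ν x = 1
  tangent : ∀ᶠ x in 𝓝 q, ∀ k, pd k f x ⬝ᵥ ν x = 0
  immersive : ∀ X, fderiv ℝ f q X = 0 → fderiv ℝ ν q X = 0 → X = 0

section CoordinateChange

variable {m : ℕ} {f ν : (Fin m → ℝ) → Fin (m + 1) → ℝ} {Φ : (Fin m → ℝ) → Fin m → ℝ}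
  {o : Fin m → ℝ}

theorem IsFrontAt.comp (h : IsFrontAt f ν (Φ o)) (hΦ : ContDiffAt ℝ 2 Φ o)
    (hinj : Injective (fderiv ℝ Φ o)) : IsFrontAt (f ∘ Φ) (ν ∘ Φ) o where
  contDiffAt := h.contDiffAt.comp o hΦ
  differentiableAt_normal := h.differentiableAt_normal.comp o (hΦ.differentiableAt two_ne_zero)
  normal_unit := hΦ.continuousAt.eventually h.normal_unit
  tangent := by
    filter_upwards [hΦ.continuousAt.eventually h.tangent, hΦ.eventually (by simp),
      hΦ.continuousAt.eventually (h.contDiffAt.eventually (by simp))] with x htan hΦx hfx k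
    rw [pd_comp (hfx.differentiableAt two_ne_zero) (hΦx.differentiableAt two_ne_zero)]
    exact fderiv_dotProduct_eq_zero htan _
  immersive X hfX hνX := by
    have hΦo : DifferentiableAt ℝ Φ o := hΦ.differentiableAt two_ne_zero
    rw [fderiv_comp o (h.contDiffAt.differentiableAt two_ne_zero) hΦo] at hfX
    rw [fderiv_comp o h.differentiableAt_normal hΦo] at hνX
    exact (map_eq_zero_iff _ hinj).1 (h.immersive _ hfX hνX)

theorem IsA2.comp (hA2 : IsA2 f ν (Φ o)) (h : IsFrontAt f ν (Φ o)) (hΦ : ContDiffAt ℝ 2 Φ o)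
    (hinj : Injective (fderiv ℝ Φ o)) : IsA2 (f ∘ Φ) (ν ∘ Φ) o := by
  obtain ⟨hsing, hnondeg, htransv⟩ := hA2
  have hf : DifferentiableAt ℝ f (Φ o) := h.contDiffAt.differentiableAt two_ne_zero
  have hΦo : DifferentiableAt ℝ Φ o := hΦ.differentiableAt two_ne_zero
  have hder := fderiv_lamb_comp h.contDiffAt h.differentiableAt_normal hΦ hsing
  have hdet := det_pd_ne_zero hinj
  refine ⟨by rw [lamb_comp hf hΦo, hsing, mul_zero], fun hzero => hnondeg ?_, fun X hX hfX => ?_⟩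
  · ext Y
    obtain ⟨X, rfl⟩ := (LinearMap.injective_iff_surjective
      (f := (fderiv ℝ Φ o : (Fin m → ℝ) →ₗ[ℝ] Fin m → ℝ))).1 hinj Y
    have hX := hder X
    rw [hzero] at hX
    exact (mul_eq_zero.1 hX.symm).resolve_left hdet
  · rw [fderiv_comp o hf hΦo] at hfX
    rw [hder]
    exact mul_ne_zero hdet (htransv _ ((map_ne_zero_iff _ hinj).2 hX) hfX)

end CoordinateChange

namespace IsFrontAt

variable {m : ℕ} {f ν : (Fin m → ℝ) → Fin (m + 1) → ℝ} {q : Fin m → ℝ}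

theorem pd_normal_dotProduct_normal (h : IsFrontAt f ν q) (k : Fin m) :
    pd k ν q ⬝ᵥ ν q = 0 := by
  have hsum : pd k ν q ⬝ᵥ ν q + ν q ⬝ᵥ pd k ν q = 0 := fderiv_dotProduct_add_eq_zero
    h.differentiableAt_normal h.differentiableAt_normal h.normal_unit (Pi.single k 1)
  rw [dotProduct_comm (ν q)] at hsum
  linarith

theorem pd_normal_dotProduct_pd_comm (h : IsFrontAt f ν q) (j k : Fin m) :
    pd j ν q ⬝ᵥ pd k f q = pd k ν q ⬝ᵥ pd j f q := by
  have hdiff (i k : Fin m) : pd i (pd k f) q ⬝ᵥ ν q + pd k f q ⬝ᵥ pd i ν q = 0 :=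
    fderiv_dotProduct_add_eq_zero (differentiableAt_pd h.contDiffAt k)
      h.differentiableAt_normal (h.tangent.mono fun _ hx => hx k) (Pi.single i 1)
  have hsymm := hdiff k j
  rw [pd_comm h.contDiffAt] at hsymm
  rw [dotProduct_comm (pd j ν q), dotProduct_comm (pd k ν q)]
  linarith [hdiff j k]

theorem pd_normal_ne_zero (h : IsFrontAt f ν q) {k : Fin m} (hk : pd k f q = 0) :
    pd k ν q ≠ 0 := fun hψ =>
  one_ne_zero (Pi.single_eq_zero_iff.1 (h.immersive (Pi.single k 1) hk hψ))

end IsFrontAt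

theorem IsA2.areaForm_update_pd_pd_ne_zero {m : ℕ} {f ν : (Fin m → ℝ) → Fin (m + 1) → ℝ}
    {q : Fin m → ℝ} (hA2 : IsA2 f ν q) (h : IsFrontAt f ν q) {k : Fin m} (hk : pd k f q = 0) :
    areaForm (ν q) (update (fun j => pd j f q) k (pd k (pd k f) q)) ≠ 0 := by
  have htransv := hA2.2.2 (Pi.single k 1) (by simp) hk
  rwa [fderiv_lamb_of_pd_eq_zero h.contDiffAt h.differentiableAt_normal hk] at htransv

theorem conormal_corollary_A2_general {m : ℕ} {f ν : (Fin m → ℝ) → Fin (m + 1) → ℝ}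
    {q : Fin m → ℝ} (h : IsFrontAt f ν q) (hA2 : IsA2 f ν q) {k : Fin m} (hk : pd k f q = 0)
    (horth : ∀ j ≠ k, pd j f q ⬝ᵥ pd k (pd k f) q = 0) :
    pd k (pd k f) q - (pd k (pd k f) q ⬝ᵥ ν q) • ν q ≠ 0 ∧
    pd k ν q ≠ 0 ∧
    (∀ j ≠ k, (pd k (pd k f) q - (pd k (pd k f) q ⬝ᵥ ν q) • ν q) ⬝ᵥ pd j f q = 0 ∧
      pd k ν q ⬝ᵥ pd j f q = 0) ∧
    ∃ t : ℝ, t ≠ 0 ∧ pd k (pd k f) q - (pd k (pd k f) q ⬝ᵥ ν q) • ν q = t • pd k ν q := by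
  set w := pd k (pd k f) q
  have hdet : areaForm (ν q) (update (fun j => pd j f q) k (w - (w ⬝ᵥ ν q) • ν q)) ≠ 0 := by
    rw [areaForm_update_sub_smul_self]
    exact hA2.areaForm_update_pd_pd_ne_zero h hk
  have hφν : (w - (w ⬝ᵥ ν q) • ν q) ⬝ᵥ ν q = 0 := by
    simp [sub_dotProduct, h.normal_unit.self_of_nhds]
  have hφ (j : Fin m) (hj : j ≠ k) : (w - (w ⬝ᵥ ν q) • ν q) ⬝ᵥ pd j f q = 0 := by
    rw [sub_dotProduct, smul_dotProduct, dotProduct_comm w, horth j hj, dotProduct_comm (ν q),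
      h.tangent.self_of_nhds j, smul_zero, sub_zero]
  have hψ (j : Fin m) : pd k ν q ⬝ᵥ pd j f q = 0 := by
    rw [h.pd_normal_dotProduct_pd_comm, hk, dotProduct_zero]
  have hψ0 : pd k ν q ≠ 0 := h.pd_normal_ne_zero hk
  obtain ⟨t, ht, hprop⟩ := exists_eq_smul_of_areaForm_ne_zero hdet hφν hφ hψ0
    (h.pd_normal_dotProduct_normal k) fun j _ => hψ j
  exact ⟨hprop ▸ smul_ne_zero ht hψ0, hψ0, fun j hj => ⟨hφ j hj, hψ j⟩, t, ht, hprop⟩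

/-- In the coordinates of the coordinate lemma around an `A₂`-point of a front `(f, ν)`,
at the point `o` (corresponding to the `A₂`-point `p`), the tangential part
`D_m φ_m = ∂_m∂_m f̃ − ⟨∂_m∂_m f̃, ν̃⟩ ν̃` and the vector `ψ_m = ∂_m ν̃` are both nonzero
and orthogonal to `∂_1 f̃, …, ∂_{m−1} f̃`; in particular they are proportional. -/
theorem conormal_corollary_A2 {m : ℕ} (hm : 2 ≤ m)
    (U : Set (Fin m → ℝ)) (hU : IsOpen U)
    (f ν : (Fin m → ℝ) → (Fin (m + 1) → ℝ))
    (hf : ContDiffOn ℝ (⊤ : ℕ∞) f U) (hν : ContDiffOn ℝ (⊤ : ℕ∞) ν U)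
    (hν1 : ∀ q ∈ U, ν q ⬝ᵥ ν q = 1)
    (htang : ∀ q ∈ U, ∀ k : Fin m, pd k f q ⬝ᵥ ν q = 0)
    (hfront : ∀ q ∈ U, ∀ X : Fin m → ℝ, fderiv ℝ f q X = 0 → fderiv ℝ ν q X = 0 → X = 0)
    (p : Fin m → ℝ) (hp : p ∈ U) (hA2 : IsA2 f ν p)
    (V : Set (Fin m → ℝ)) (o : Fin m → ℝ) (Φ Ψ : (Fin m → ℝ) → (Fin m → ℝ))
    (hV : IsOpen V) (ho : o ∈ V) (hΦ : ContDiffOn ℝ (⊤ : ℕ∞) Φ V)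
    (hΦV : IsOpen (Φ '' V)) (hΦU : Φ '' V ⊆ U) (hΦo : Φ o = p)
    (hΨ : ContDiffOn ℝ (⊤ : ℕ∞) Ψ (Φ '' V))
    (hΨΦ : ∀ x ∈ V, Ψ (Φ x) = x) (hΦΨ : ∀ y ∈ Φ '' V, Φ (Ψ y) = y)
    (hsing : ∀ x ∈ V, (lamb f ν (Φ x) = 0 ↔ x ⟨m - 1, by omega⟩ = 0))
    (hnull : ∀ x ∈ V, x ⟨m - 1, by omega⟩ = 0 →
      pd (⟨m - 1, by omega⟩ : Fin m) (f ∘ Φ) x = 0)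
    (horth : ∀ j : Fin m, (j : ℕ) < m - 1 →
      pd j (f ∘ Φ) o ⬝ᵥ
        pd (⟨m - 1, by omega⟩ : Fin m) (pd (⟨m - 1, by omega⟩ : Fin m) (f ∘ Φ)) o = 0) :
    (pd (⟨m - 1, by omega⟩ : Fin m) (pd (⟨m - 1, by omega⟩ : Fin m) (f ∘ Φ)) o
        - (pd (⟨m - 1, by omega⟩ : Fin m) (pd (⟨m - 1, by omega⟩ : Fin m) (f ∘ Φ)) o
            ⬝ᵥ (ν ∘ Φ) o) • (ν ∘ Φ) o ≠ 0) ∧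
    pd (⟨m - 1, by omega⟩ : Fin m) (ν ∘ Φ) o ≠ 0 ∧
    (∀ j : Fin m, (j : ℕ) < m - 1 →
      (pd (⟨m - 1, by omega⟩ : Fin m) (pd (⟨m - 1, by omega⟩ : Fin m) (f ∘ Φ)) o
          - (pd (⟨m - 1, by omega⟩ : Fin m) (pd (⟨m - 1, by omega⟩ : Fin m) (f ∘ Φ)) o
              ⬝ᵥ (ν ∘ Φ) o) • (ν ∘ Φ) o) ⬝ᵥ pd j (f ∘ Φ) o = 0 ∧
      pd (⟨m - 1, by omega⟩ : Fin m) (ν ∘ Φ) o ⬝ᵥ pd j (f ∘ Φ) o = 0) ∧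
    ∃ t : ℝ, t ≠ 0 ∧
      pd (⟨m - 1, by omega⟩ : Fin m) (pd (⟨m - 1, by omega⟩ : Fin m) (f ∘ Φ)) o
          - (pd (⟨m - 1, by omega⟩ : Fin m) (pd (⟨m - 1, by omega⟩ : Fin m) (f ∘ Φ)) o
              ⬝ᵥ (ν ∘ Φ) o) • (ν ∘ Φ) o
        = t • pd (⟨m - 1, by omega⟩ : Fin m) (ν ∘ Φ) o := by
  subst hΦo
  have hΦ₂ : ContDiffAt ℝ 2 Φ o := (hΦ.contDiffAt (hV.mem_nhds ho)).of_le (by norm_cast)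
  have hinj : Injective (fderiv ℝ Φ o) :=
    injective_fderiv_of_eventually_leftInverse (hΦ₂.differentiableAt two_ne_zero)
      ((hΨ.contDiffAt (hΦV.mem_nhds ⟨o, ho, rfl⟩)).differentiableAt (by simp))
      (eventually_of_mem (hV.mem_nhds ho) hΨΦ)
  have hU' : U ∈ 𝓝 (Φ o) := hU.mem_nhds hp
  have hgerm : IsFrontAt f ν (Φ o) :=
    { contDiffAt := (hf.contDiffAt hU').of_le (by norm_cast)
      differentiableAt_normal := (hν.contDiffAt hU').differentiableAt (by simp)
      normal_unit := eventually_of_mem hU' hν1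
      tangent := eventually_of_mem hU' htang
      immersive := hfront _ hp }
  have hne (j : Fin m) : (j : ℕ) < m - 1 ↔ j ≠ ⟨m - 1, by omega⟩ := by
    have := j.isLt
    simp only [Ne, Fin.ext_iff]
    omega
  simp only [hne] at horth ⊢
  exact conormal_corollary_A2_general (hgerm.comp hΦ₂ hinj) (hA2.comp hgerm hΦ₂ hinj)
    (hnull o ho ((hsing o ho).1 hA2.1)) horth
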